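/- arXiv:2406.10992 — 4 statements merged into one kernel-verified Lean document; each statement's English description precedes it below -/
import Mathlib

section
/- Let D be a dendriform algebra and V a vector space. An extending datum Ω(D,V) = (▷₁,▷₂,◁₁,◁₂,⇀₁,⇀₂,↼₁,↼₂,≻_V,≺_V) with trivial cocycles f₁ = f₂ = 0 is a dendriform extending structure of D through V (i.e., the unified product with these operations is a dendriform algebra) if and only if (D,V,▷₁,▷₂,◁₁,◁₂,⇀₁,⇀₂,↼₁,↼₂) is a matched pair of dendriform algebras, that is: (V,≻_V,≺_V) is a dendriform algebra; (M1) (V,▷₁,▷₂,◁₁,◁₂) is a D-bimodule and (D,⇀₁,⇀₂,↼₁,↼₂) is a V-bimodule; and for all a,b ∈ D, x,y ∈ V (with ⋆ := ≻+≺, ▷ := ▷₁+▷₂, ◁ := ◁₁+◁₂, ⇀ := ⇀₁+⇀₂, ↼ := ↼₁+↼₂, ⋆_V := ≻_V+≺_V): (M2) (a⋆b)↼₁x = a≻(b↼₁x) + a↼₁(b▷₁x), (a≺b)↼₂x = a≺(b↼x) + a↼₂(b▷x), (a≻b)↼₂x = a≻(b↼₂x) + a↼₁(b▷₂x); (M3)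 (x⇀a)≻b + (x◁a)⇀₁b = x⇀₁(a≻b), (x⇀₂a)≺b + (x◁₂a)⇀₂b = x⇀₂(a⋆b), (x⇀₁a)≺b + (x◁₁a)⇀₂b = x⇀₁(a≺b); (M4) (a↼x)≻b + (a▷x)⇀₁b = a≻(x⇀₁b) + a↼₁(x◁₁b), (a↼₂x)≺b + (a▷₂x)⇀₂b = a≺(x⇀b) + a↼₂(x◁b), (a↼₁x)≺b + (a▷₁x)⇀₂b = a≻(x⇀₂b) + a↼₁(x◁₂b); (M5) (x⋆_Vy)◁₁a = x◁₁(y⇀₁a) + x≻_V(y◁₁a), (x≺_Vy)◁₂a = x◁₂(y⇀a) + x≺_V(y◁a), (x≻_Vy)◁₂a = x◁₁(y⇀₂a) + x≻_V(y◁₂a); (M6) (a↼x)▷₁y + (a▷x)≻_Vy = a▷₁(x≻_Vy), (a↼₂x)▷₂y + (a▷₂x)≺_Vy = a▷₂(x⋆_Vy), (a↼₁x)▷₂y + (a▷₁x)≺_Vy = a▷₁(x≺_Vy); (M7) (x⇀a)▷₁y + (x◁a)≻_Vy = x◁₁(a↼₁y) + x≻_V(a▷₁y), (x⇀₂a)▷₂y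 + (x◁₂a)≺_Vy = x◁₂(a↼y) + x≺_V(a▷y), (x⇀₁a)▷₂y + (x◁₁a)≺_Vy = x◁₁(a↼₂y) + x≻_V(a▷₂y). -/
/-!
Each dendriform axiom on `D × V` has the shape `A (B u v) w = C u (E v w)`, with `A`, `B`, `C`, `E`
among the biadditive operations `⪰`, `⪯` and `⪰ + ⪯`. Both sides are additive in each of `u`, `v`,
`w`, so the axiom may be tested on triples of pure elements `(a, 0)` and `(0, x)`
(`forall_assoc_iff_pure`). For each of the eight types of pure triples, the `D`- and `V`-components
of the three axioms are `0 = 0`, the dendriform axioms of `D` or of `V`, bimodule axioms, or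
compatibility conditions of a matched pair; the vanishing of the cocycles removes the `D`-component
of a product of two elements of `V`. Bilinearity of `⪰` and `⪯` is inherited from the datum.
-/

/- Common framework for dendriform algebras, extending structures and unified
products, over the field `ℂ`.  All operations are encoded as plain functions
together with bilinearity predicates. -/

namespace DendriformES

section Basic

variable {M N P : Type*} [AddCommGroup M] [Module ℂ M] [AddCommGroup N] [Module ℂ N]
  [AddCommGroup P] [Module ℂ P]

/-- A map `f : M → N → P` is (ℂ-)bilinear. -/
def IsBilinear (f : M → N → P) : Prop :=
  (∀ a b y, f (a + b) y = f a y + f b y) ∧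
  (∀ (c : ℂ) (a : M) (y : N), f (c • a) y = c • f a y) ∧
  (∀ a x y, f a (x + y) = f a x + f a y) ∧
  (∀ (c : ℂ) (a : M) (x : N), f a (c • x) = c • f a x)

end Basic

section Dend

variable {D V : Type*} [AddCommGroup D] [Module ℂ D] [AddCommGroup V] [Module ℂ V]

/-- The three dendriform axioms for a pair of binary operations `s = ≻`, `p = ≺`. -/
def DendAxioms (s p : D → D → D) : Prop :=
  (∀ x y z, s (s x y + p x y) z = s x (s y z)) ∧
  (∀ x y z, p (p x y) z = p x (s y z + p y z)) ∧
  (∀ x y z, p (s x y) z = s x (p y z))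

/-- `(D, s, p)` is a dendriform algebra: both operations are bilinear and the
three dendriform axioms hold. -/
def IsDendriform (s p : D → D → D) : Prop :=
  IsBilinear s ∧ IsBilinear p ∧ DendAxioms s p

/-- `(V, t1, t2)` is a left module over the dendriform algebra `(D, s, p)`. -/
def IsLeftDModule (s p : D → D → D) (t1 t2 : D → V → V) : Prop :=
  IsBilinear t1 ∧ IsBilinear t2 ∧
  (∀ a b x, t1 (s a b + p a b) x = t1 a (t1 b x)) ∧
  (∀ a b x, t2 (p a b) x = t2 a (t1 b x + t2 b x)) ∧
  (∀ a b x, t2 (s a b) x = t1 a (t2 b x))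

/-- `(V, l1, l2)` is a right module over the dendriform algebra `(D, s, p)`. -/
def IsRightDModule (s p : D → D → D) (l1 l2 : V → D → V) : Prop :=
  IsBilinear l1 ∧ IsBilinear l2 ∧
  (∀ a b x, l1 (l1 x a + l2 x a) b = l1 x (s a b)) ∧
  (∀ a b x, l2 (l2 x a) b = l2 x (s a b + p a b)) ∧
  (∀ a b x, l2 (l1 x a) b = l1 x (p a b))

/-- `(V, t1, t2, l1, l2)` is a bimodule over the dendriform algebra `(D, s, p)`. -/
def IsDBimodule (s p : D → D → D) (t1 t2 : D → V → V) (l1 l2 : V → D → V) : Prop :=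
  IsLeftDModule s p t1 t2 ∧ IsRightDModule s p l1 l2 ∧
  (∀ a b x, l1 (t1 a x + t2 a x) b = t1 a (l1 x b)) ∧
  (∀ a b x, l2 (t2 a x) b = t2 a (l1 x b + l2 x b)) ∧
  (∀ a b x, l2 (t1 a x) b = t1 a (l2 x b))

/-- A morphism of dendriform algebras: a linear map preserving both operations. -/
def IsDendMorphism (s p : D → D → D) (s' p' : V → V → V) (φ : D → V) : Prop :=
  IsLinearMap ℂ φ ∧ (∀ x y, φ (s x y) = s' (φ x) (φ y)) ∧
    (∀ x y, φ (p x y) = p' (φ x) (φ y))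

end Dend

/-- An extending datum `Ω(D,V)` of `D` through `V`: twelve maps
`tr1, tr2 = ▷₁, ▷₂ : D×V→V`, `sl1, sl2 = ◁₁, ◁₂ : V×D→V`,
`hr1, hr2 = ⇀₁, ⇀₂ : V×D→D`, `hl1, hl2 = ↼₁, ↼₂ : D×V→D`,
`cf1, cf2 = f₁, f₂ : V×V→D`, `sv, pv = ≻_V, ≺_V : V×V→V`. -/
structure ExtendingDatum (D V : Type*) [AddCommGroup D] [Module ℂ D]
    [AddCommGroup V] [Module ℂ V] where
  tr1 : D → V → V
  tr2 : D → V → V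
  sl1 : V → D → V
  sl2 : V → D → V
  hr1 : V → D → D
  hr2 : V → D → D
  hl1 : D → V → D
  hl2 : D → V → D
  cf1 : V → V → D
  cf2 : V → V → D
  sv : V → V → V
  pv : V → V → V

section Datum

variable {D V : Type*} [AddCommGroup D] [Module ℂ D] [AddCommGroup V] [Module ℂ V]

/-- All twelve maps of an extending datum are bilinear. -/
def ExtendingDatum.Bilinear (Ω : ExtendingDatum D V) : Prop :=
  IsBilinear Ω.tr1 ∧ IsBilinear Ω.tr2 ∧ IsBilinear Ω.sl1 ∧ IsBilinear Ω.sl2 ∧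
  IsBilinear Ω.hr1 ∧ IsBilinear Ω.hr2 ∧ IsBilinear Ω.hl1 ∧ IsBilinear Ω.hl2 ∧
  IsBilinear Ω.cf1 ∧ IsBilinear Ω.cf2 ∧ IsBilinear Ω.sv ∧ IsBilinear Ω.pv

/-- The operation `⪰` of the unified product `D ♮ V`. -/
def uSucc (s : D → D → D) (Ω : ExtendingDatum D V) : D × V → D × V → D × V :=
  fun u v =>
    (s u.1 v.1 + Ω.hl1 u.1 v.2 + Ω.hr1 u.2 v.1 + Ω.cf1 u.2 v.2,
     Ω.tr1 u.1 v.2 + Ω.sl1 u.2 v.1 + Ω.sv u.2 v.2)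

/-- The operation `⪯` of the unified product `D ♮ V`. -/
def uPrec (p : D → D → D) (Ω : ExtendingDatum D V) : D × V → D × V → D × V :=
  fun u v =>
    (p u.1 v.1 + Ω.hl2 u.1 v.2 + Ω.hr2 u.2 v.1 + Ω.cf2 u.2 v.2,
     Ω.tr2 u.1 v.2 + Ω.sl2 u.2 v.1 + Ω.pv u.2 v.2)

/-- An extending datum is a dendriform extending structure when the unified
product `D ♮ V` is a dendriform algebra. -/
def IsExtendingStructure (s p : D → D → D) (Ω : ExtendingDatum D V) : Prop :=
  Ω.Bilinear ∧ IsDendriform (uSucc s Ω) (uPrec p Ω)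

/-- Conditions (E1)–(E5) on a pair of linear maps `g : V → D`, `h : V → V`
relating two extending datums `Ω`, `Ω'`. -/
def ECond (s p : D → D → D) (Ω Ω' : ExtendingDatum D V) (g : V → D) (h : V → V) : Prop :=
  -- (E1)
  (∀ a x, h (Ω.tr1 a x) = Ω'.tr1 a (h x)) ∧
  (∀ a x, h (Ω.tr2 a x) = Ω'.tr2 a (h x)) ∧
  (∀ a x, h (Ω.sl1 x a) = Ω'.sl1 (h x) a) ∧
  (∀ a x, h (Ω.sl2 x a) = Ω'.sl2 (h x) a) ∧
  -- (E2)
  (∀ a x, Ω.hr1 x a + g (Ω.sl1 x a) = s (g x) a + Ω'.hr1 (h x) a) ∧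
  (∀ a x, Ω.hr2 x a + g (Ω.sl2 x a) = p (g x) a + Ω'.hr2 (h x) a) ∧
  -- (E3)
  (∀ a x, Ω.hl1 a x + g (Ω.tr1 a x) = s a (g x) + Ω'.hl1 a (h x)) ∧
  (∀ a x, Ω.hl2 a x + g (Ω.tr2 a x) = p a (g x) + Ω'.hl2 a (h x)) ∧
  -- (E4)
  (∀ x y, Ω.cf1 x y + g (Ω.sv x y) =
      s (g x) (g y) + Ω'.hl1 (g x) (h y) + Ω'.hr1 (h x) (g y) + Ω'.cf1 (h x) (h y)) ∧
  (∀ x y, Ω.cf2 x y + g (Ω.pv x y) =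
      p (g x) (g y) + Ω'.hl2 (g x) (h y) + Ω'.hr2 (h x) (g y) + Ω'.cf2 (h x) (h y)) ∧
  -- (E5)
  (∀ x y, h (Ω.sv x y) = Ω'.tr1 (g x) (h y) + Ω'.sl1 (h x) (g y) + Ω'.sv (h x) (h y)) ∧
  (∀ x y, h (Ω.pv x y) = Ω'.tr2 (g x) (h y) + Ω'.sl2 (h x) (g y) + Ω'.pv (h x) (h y))

/-- A deformation map of an extending structure `Ω(D,V)`. -/
def IsDeformationMap (s p : D → D → D) (Ω : ExtendingDatum D V) (d : V → D) : Prop :=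
  IsLinearMap ℂ d ∧
  (∀ x y, s (d x) (d y) - d (Ω.sv x y) =
      d (Ω.tr1 (d x) y + Ω.sl1 x (d y)) - Ω.hl1 (d x) y - Ω.hr1 x (d y) - Ω.cf1 x y) ∧
  (∀ x y, p (d x) (d y) - d (Ω.pv x y) =
      d (Ω.tr2 (d x) y + Ω.sl2 x (d y)) - Ω.hl2 (d x) y - Ω.hr2 x (d y) - Ω.cf2 x y)

/-- The operation `≻_d` of the deformation `V_d` of `V`. -/
def defSucc (Ω : ExtendingDatum D V) (d : V → D) : V → V → V :=
  fun x y => Ω.sv x y + Ω.tr1 (d x) y + Ω.sl1 x (d y)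

/-- The operation `≺_d` of the deformation `V_d` of `V`. -/
def defPrec (Ω : ExtendingDatum D V) (d : V → D) : V → V → V :=
  fun x y => Ω.pv x y + Ω.tr2 (d x) y + Ω.sl2 x (d y)

end Datum

section Canonical

variable {E : Type*} [AddCommGroup E] [Module ℂ E]

theorem sub_mem_ker (D : Submodule ℂ E) (ρ : E →ₗ[ℂ] E)
    (hρD : ∀ u, ρ u ∈ D) (hfix : ∀ a ∈ D, ρ a = a) (u : E) :
    u - ρ u ∈ LinearMap.ker ρ := by
  have h := hfix (ρ u) (hρD u)
  simp [LinearMap.mem_ker, map_sub, h]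

/-- The canonical extending datum of `D` through `V = ker ρ` associated to a
dendriform algebra structure `(sE, pE)` on `E` and a linear retraction
`ρ : E → D`. -/
def canonicalDatum (sE pE : E → E → E) (D : Submodule ℂ E) (ρ : E →ₗ[ℂ] E)
    (hρD : ∀ u, ρ u ∈ D) (hfix : ∀ a ∈ D, ρ a = a) :
    ExtendingDatum ↥D ↥(LinearMap.ker ρ) where
  tr1 := fun a x => ⟨sE a.1 x.1 - ρ (sE a.1 x.1), sub_mem_ker D ρ hρD hfix _⟩
  tr2 := fun a x => ⟨pE a.1 x.1 - ρ (pE a.1 x.1), sub_mem_ker D ρ hρD hfix _⟩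
  sl1 := fun x a => ⟨sE x.1 a.1 - ρ (sE x.1 a.1), sub_mem_ker D ρ hρD hfix _⟩
  sl2 := fun x a => ⟨pE x.1 a.1 - ρ (pE x.1 a.1), sub_mem_ker D ρ hρD hfix _⟩
  hr1 := fun x a => ⟨ρ (sE x.1 a.1), hρD _⟩
  hr2 := fun x a => ⟨ρ (pE x.1 a.1), hρD _⟩
  hl1 := fun a x => ⟨ρ (sE a.1 x.1), hρD _⟩
  hl2 := fun a x => ⟨ρ (pE a.1 x.1), hρD _⟩
  cf1 := fun x y => ⟨ρ (sE x.1 y.1), hρD _⟩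
  cf2 := fun x y => ⟨ρ (pE x.1 y.1), hρD _⟩
  sv := fun x y => ⟨sE x.1 y.1 - ρ (sE x.1 y.1), sub_mem_ker D ρ hρD hfix _⟩
  pv := fun x y => ⟨pE x.1 y.1 - ρ (pE x.1 y.1), sub_mem_ker D ρ hρD hfix _⟩

/-- The pair of operations on `E` associated to an extending datum of `D`
through `V = ker ρ` (the map `Υ₂`). -/
def datumToOps (D : Submodule ℂ E) (ρ : E →ₗ[ℂ] E)
    (hρD : ∀ u, ρ u ∈ D) (hfix : ∀ a ∈ D, ρ a = a) (sD pD : ↥D → ↥D → ↥D)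
    (Ω : ExtendingDatum ↥D ↥(LinearMap.ker ρ)) : (E → E → E) × (E → E → E) :=
  let dp : E → ↥D := fun u => ⟨ρ u, hρD u⟩
  let vp : E → ↥(LinearMap.ker ρ) := fun u => ⟨u - ρ u, sub_mem_ker D ρ hρD hfix u⟩
  (fun u v =>
     (sD (dp u) (dp v) : E) + (Ω.hl1 (dp u) (vp v) : E) + (Ω.hr1 (vp u) (dp v) : E)
       + (Ω.cf1 (vp u) (vp v) : E) + (Ω.tr1 (dp u) (vp v) : E) + (Ω.sl1 (vp u) (dp v) : E)
       + (Ω.sv (vp u) (vp v) : E),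
   fun u v =>
     (pD (dp u) (dp v) : E) + (Ω.hl2 (dp u) (vp v) : E) + (Ω.hr2 (vp u) (dp v) : E)
       + (Ω.cf2 (vp u) (vp v) : E) + (Ω.tr2 (dp u) (vp v) : E) + (Ω.sl2 (vp u) (dp v) : E)
       + (Ω.pv (vp u) (vp v) : E))

end Canonical

end DendriformES

namespace DendriformES

section Helpers

variable {M N P : Type*} [AddCommGroup M] [Module ℂ M] [AddCommGroup N] [Module ℂ N]
  [AddCommGroup P] [Module ℂ P]

theorem IsBilinear.zero_left {f : M → N → P} (h : IsBilinear f) (y : N) : f 0 y = 0 := by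
  simpa using h.2.1 0 0 y

theorem IsBilinear.zero_right {f : M → N → P} (h : IsBilinear f) (x : M) : f x 0 = 0 := by
  simpa using h.2.2.2 0 x 0

theorem IsBilinear.add {f g : M → N → P} (hf : IsBilinear f) (hg : IsBilinear g) :
    IsBilinear (fun x y => f x y + g x y) := by
  obtain ⟨f1, f2, f3, f4⟩ := hf
  obtain ⟨g1, g2, g3, g4⟩ := hg
  refine ⟨?_, ?_, ?_, ?_⟩ <;> intros <;> simp only [*, smul_add] <;> abel

end Helpers

section Pure

variable {D V : Type*} [AddCommGroup D] [Module ℂ D] [AddCommGroup V] [Module ℂ V]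

/-- An associativity-type identity between bilinear operations on `D × V` holds as soon as it holds
on triples whose entries lie in `D` or in `V`. -/
theorem forall_assoc_iff_pure {A B C E : D × V → D × V → D × V}
    (hA : IsBilinear A) (hB : IsBilinear B) (hC : IsBilinear C) (hE : IsBilinear E) :
    (∀ u v w, A (B u v) w = C u (E v w)) ↔
      (∀ a b c : D, A (B (a, 0) (b, 0)) (c, 0) = C (a, 0) (E (b, 0) (c, 0))) ∧
      (∀ (a b : D) (x : V), A (B (a, 0) (b, 0)) (0, x) = C (a, 0) (E (b, 0) (0, x))) ∧
      (∀ (a : D) (x : V) (b : D), A (B (a, 0) (0, x)) (b, 0) = C (a, 0) (E (0, x) (b, 0))) ∧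
      (∀ (x : V) (a b : D), A (B (0, x) (a, 0)) (b, 0) = C (0, x) (E (a, 0) (b, 0))) ∧
      (∀ (a : D) (x y : V), A (B (a, 0) (0, x)) (0, y) = C (a, 0) (E (0, x) (0, y))) ∧
      (∀ (x : V) (a : D) (y : V), A (B (0, x) (a, 0)) (0, y) = C (0, x) (E (a, 0) (0, y))) ∧
      (∀ (x y : V) (a : D), A (B (0, x) (0, y)) (a, 0) = C (0, x) (E (0, y) (a, 0))) ∧
      (∀ x y z : V, A (B (0, x) (0, y)) (0, z) = C (0, x) (E (0, y) (0, z))) := by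
  refine ⟨fun h => ⟨fun _ _ _ => h _ _ _, fun _ _ _ => h _ _ _, fun _ _ _ => h _ _ _,
    fun _ _ _ => h _ _ _, fun _ _ _ => h _ _ _, fun _ _ _ => h _ _ _, fun _ _ _ => h _ _ _,
    fun _ _ _ => h _ _ _⟩, ?_⟩
  rintro ⟨h1, h2, h3, h4, h5, h6, h7, h8⟩ ⟨a, x⟩ ⟨b, y⟩ ⟨c, z⟩
  have split : ∀ (d : D) (v : V), (d, v) = (d, 0) + (0, v) := by simp
  rw [split a x, split b y, split c z]
  simp only [hA.1, hA.2.2.1, hB.1, hB.2.2.1, hC.1, hC.2.2.1, hE.1, hE.2.2.1,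
    h1, h2, h3, h4, h5, h6, h7, h8]

theorem uSucc_isBilinear {s : D → D → D} (hs : IsBilinear s) {Ω : ExtendingDatum D V}
    (hΩ : Ω.Bilinear) : IsBilinear (uSucc s Ω) := by
  obtain ⟨⟨a1, a2, a3, a4⟩, -, ⟨b1, b2, b3, b4⟩, -, ⟨c1, c2, c3, c4⟩, -, ⟨d1, d2, d3, d4⟩, -,
    ⟨e1, e2, e3, e4⟩, -, ⟨f1, f2, f3, f4⟩, -⟩ := hΩ
  obtain ⟨s1, s2, s3, s4⟩ := hs
  refine ⟨?_, ?_, ?_, ?_⟩ <;> intros <;> ext <;>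
    simp only [uSucc, Prod.fst_add, Prod.snd_add, Prod.smul_fst, Prod.smul_snd, smul_add, *] <;>
    abel

theorem uPrec_isBilinear {p : D → D → D} (hp : IsBilinear p) {Ω : ExtendingDatum D V}
    (hΩ : Ω.Bilinear) : IsBilinear (uPrec p Ω) := by
  obtain ⟨-, ⟨a1, a2, a3, a4⟩, -, ⟨b1, b2, b3, b4⟩, -, ⟨c1, c2, c3, c4⟩, -, ⟨d1, d2, d3, d4⟩, -,
    ⟨e1, e2, e3, e4⟩, -, ⟨f1, f2, f3, f4⟩⟩ := hΩ
  obtain ⟨s1, s2, s3, s4⟩ := hp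
  refine ⟨?_, ?_, ?_, ?_⟩ <;> intros <;> ext <;>
    simp only [uPrec, Prod.fst_add, Prod.snd_add, Prod.smul_fst, Prod.smul_snd, smul_add, *] <;>
    abel

end Pure

/-- an extending datum with trivial cocycles `f₁ = f₂ = 0` is a
dendriform extending structure iff the data form a matched pair of dendriform
algebras, i.e. `(V,≻_V,≺_V)` is a dendriform algebra, (M1) holds and
(M2)–(M7) hold. -/
theorem matchedPair_iff {D V : Type*}
    [AddCommGroup D] [Module ℂ D] [AddCommGroup V] [Module ℂ V]
    (s p : D → D → D) (hD : IsDendriform s p)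
    (Ω : ExtendingDatum D V) (hbil : Ω.Bilinear)
    (hf1 : ∀ x y, Ω.cf1 x y = 0) (hf2 : ∀ x y, Ω.cf2 x y = 0) :
    IsExtendingStructure s p Ω ↔
      (IsDendriform Ω.sv Ω.pv ∧
      -- (M1)
      IsDBimodule s p Ω.tr1 Ω.tr2 Ω.sl1 Ω.sl2 ∧
      IsDBimodule Ω.sv Ω.pv Ω.hr1 Ω.hr2 Ω.hl1 Ω.hl2 ∧
      -- (M2)
      (∀ a b x, Ω.hl1 (s a b + p a b) x = s a (Ω.hl1 b x) + Ω.hl1 a (Ω.tr1 b x)) ∧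
      (∀ a b x, Ω.hl2 (p a b) x =
        p a (Ω.hl1 b x + Ω.hl2 b x) + Ω.hl2 a (Ω.tr1 b x + Ω.tr2 b x)) ∧
      (∀ a b x, Ω.hl2 (s a b) x = s a (Ω.hl2 b x) + Ω.hl1 a (Ω.tr2 b x)) ∧
      -- (M3)
      (∀ a b x, s (Ω.hr1 x a + Ω.hr2 x a) b + Ω.hr1 (Ω.sl1 x a + Ω.sl2 x a) b =
        Ω.hr1 x (s a b)) ∧
      (∀ a b x, p (Ω.hr2 x a) b + Ω.hr2 (Ω.sl2 x a) b = Ω.hr2 x (s a b + p a b)) ∧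
      (∀ a b x, p (Ω.hr1 x a) b + Ω.hr2 (Ω.sl1 x a) b = Ω.hr1 x (p a b)) ∧
      -- (M4)
      (∀ a b x, s (Ω.hl1 a x + Ω.hl2 a x) b + Ω.hr1 (Ω.tr1 a x + Ω.tr2 a x) b =
        s a (Ω.hr1 x b) + Ω.hl1 a (Ω.sl1 x b)) ∧
      (∀ a b x, p (Ω.hl2 a x) b + Ω.hr2 (Ω.tr2 a x) b =
        p a (Ω.hr1 x b + Ω.hr2 x b) + Ω.hl2 a (Ω.sl1 x b + Ω.sl2 x b)) ∧
      (∀ a b x, p (Ω.hl1 a x) b + Ω.hr2 (Ω.tr1 a x) b =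
        s a (Ω.hr2 x b) + Ω.hl1 a (Ω.sl2 x b)) ∧
      -- (M5)
      (∀ a x y, Ω.sl1 (Ω.sv x y + Ω.pv x y) a =
        Ω.sl1 x (Ω.hr1 y a) + Ω.sv x (Ω.sl1 y a)) ∧
      (∀ a x y, Ω.sl2 (Ω.pv x y) a =
        Ω.sl2 x (Ω.hr1 y a + Ω.hr2 y a) + Ω.pv x (Ω.sl1 y a + Ω.sl2 y a)) ∧
      (∀ a x y, Ω.sl2 (Ω.sv x y) a = Ω.sl1 x (Ω.hr2 y a) + Ω.sv x (Ω.sl2 y a)) ∧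
      -- (M6)
      (∀ a x y, Ω.tr1 (Ω.hl1 a x + Ω.hl2 a x) y + Ω.sv (Ω.tr1 a x + Ω.tr2 a x) y =
        Ω.tr1 a (Ω.sv x y)) ∧
      (∀ a x y, Ω.tr2 (Ω.hl2 a x) y + Ω.pv (Ω.tr2 a x) y =
        Ω.tr2 a (Ω.sv x y + Ω.pv x y)) ∧
      (∀ a x y, Ω.tr2 (Ω.hl1 a x) y + Ω.pv (Ω.tr1 a x) y = Ω.tr1 a (Ω.pv x y)) ∧
      -- (M7)
      (∀ a x y, Ω.tr1 (Ω.hr1 x a + Ω.hr2 x a) y + Ω.sv (Ω.sl1 x a + Ω.sl2 x a) y =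
        Ω.sl1 x (Ω.hl1 a y) + Ω.sv x (Ω.tr1 a y)) ∧
      (∀ a x y, Ω.tr2 (Ω.hr2 x a) y + Ω.pv (Ω.sl2 x a) y =
        Ω.sl2 x (Ω.hl1 a y + Ω.hl2 a y) + Ω.pv x (Ω.tr1 a y + Ω.tr2 a y)) ∧
      (∀ a x y, Ω.tr2 (Ω.hr1 x a) y + Ω.pv (Ω.sl1 x a) y =
        Ω.sl1 x (Ω.hl2 a y) + Ω.sv x (Ω.tr2 a y))) := by
  have hS := uSucc_isBilinear hD.1 hbil
  have hP := uPrec_isBilinear hD.2.1 hbil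
  have hSP := hS.add hP
  -- On pure triples the axioms become componentwise identities in `D` and `V`.
  have key : DendAxioms (uSucc s Ω) (uPrec p Ω) ↔ _ :=
    and_congr (forall_assoc_iff_pure hS hSP hS hS)
      (and_congr (forall_assoc_iff_pure hP hP hP hSP) (forall_assoc_iff_pure hP hS hS hP))
  obtain ⟨bs, bp, d1, d2, d3⟩ := hD
  have hbil' := hbil
  obtain ⟨t1, t2, l1, l2, r1, r2, k1, k2, -, -, v1, v2⟩ := hbil'
  simp only [uSucc, uPrec, hf1, hf2, bs.zero_left, bs.zero_right, bp.zero_left, bp.zero_right,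
    t1.zero_left, t1.zero_right, t2.zero_left, t2.zero_right, l1.zero_left, l1.zero_right,
    l2.zero_left, l2.zero_right, r1.zero_left, r1.zero_right, r2.zero_left, r2.zero_right,
    k1.zero_left, k1.zero_right, k2.zero_left, k2.zero_right, v1.zero_left, v1.zero_right,
    v2.zero_left, v2.zero_right, add_zero, zero_add, Prod.mk_add_mk, Prod.mk.injEq,
    forall_and, and_true, true_and] at key
  have key' : IsExtendingStructure s p Ω ↔ DendAxioms (uSucc s Ω) (uPrec p Ω) :=
    ⟨fun h => h.2.2.2, fun h => ⟨hbil, hS, hP, h⟩⟩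
  rw [key']
  simp only [DendAxioms, uSucc, uPrec] at key ⊢
  rw [key]
  -- Both sides now list the same identities, up to grouping and the order of the quantifiers; the
  -- identities on triples from `D` are the axioms `d1`, `d2`, `d3`.
  constructor
  · rintro ⟨⟨h1, ⟨h2, h3⟩, ⟨h4, h5⟩, ⟨h6, h7⟩, ⟨h8, h9⟩, ⟨h10, h11⟩, ⟨h12, h13⟩, h14⟩,
      ⟨i1, ⟨i2, i3⟩, ⟨i4, i5⟩, ⟨i6, i7⟩, ⟨i8, i9⟩, ⟨i10, i11⟩, ⟨i12, i13⟩, i14⟩,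
      ⟨j1, ⟨j2, j3⟩, ⟨j4, j5⟩, ⟨j6, j7⟩, ⟨j8, j9⟩, ⟨j10, j11⟩, ⟨j12, j13⟩, j14⟩⟩
    refine ⟨⟨v1, v2, h14, i14, j14⟩,
      ⟨⟨t1, t2, h3, i3, j3⟩, ⟨l1, l2, ?_, ?_, ?_⟩, ?_, ?_, ?_⟩,
      ⟨⟨r1, r2, h12, i12, j12⟩, ⟨k1, k2, ?_, ?_, ?_⟩, ?_, ?_, ?_⟩,
      h2, i2, j2, ?_⟩
    all_goals
      repeat' apply And.intro
      all_goals intros; solve_by_elim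
  · rintro ⟨⟨-, -, h1, h2, h3⟩, ⟨⟨-, -, h4, h5, h6⟩, ⟨-, -, h7, h8, h9⟩, h10, h11, h12⟩,
      ⟨⟨-, -, i4, i5, i6⟩, ⟨-, -, i7, i8, i9⟩, i10, i11, i12⟩,
      m1, m2, m3, m4, m5, m6, m7, m8, m9, m10, m11, m12, m13, m14, m15, m16, m17, m18⟩
    repeat' apply And.intro
    all_goals intros; solve_by_elim

end DendriformES
end

section
/- Let D be a dendriform algebra, V a vector space, Ω(D,V) a dendriform extending structure of D through V, and d : V → D a deformation map of Ω(D,V). Define bilinear operations on V by x ≻_d y := x≻_Vy + d(x)▷₁y + x◁₁d(y) and x ≺_d y := x≺_Vy + d(x)▷₂y + x◁₂d(y). Then V_d := (V, ≻_d, ≺_d) is a dendriform algebra. -/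
namespace DendriformES

section Transport

variable {V E : Type*} [AddCommGroup V] [Module ℂ V] [AddCommGroup E] [Module ℂ E]

theorem IsBilinear.of_injective {f : E → E → E} {g : V → V → V} (hf : IsBilinear f)
    (ι : V →ₗ[ℂ] E) (hι : Function.Injective ι) (h : ∀ x y, ι (g x y) = f (ι x) (ι y)) :
    IsBilinear g := by
  obtain ⟨h1, h2, h3, h4⟩ := hf
  refine ⟨fun a b y => hι ?_, fun c a y => hι ?_, fun a x y => hι ?_, fun c a x => hι ?_⟩
  · simp only [h, map_add, h1]
  · simp only [h, map_smul, h2]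
  · simp only [h, map_add, h3]
  · simp only [h, map_smul, h4]

theorem IsDendriform.of_injective {s p : E → E → E} {s' p' : V → V → V}
    (hE : IsDendriform s p) (ι : V →ₗ[ℂ] E) (hι : Function.Injective ι)
    (hs : ∀ x y, ι (s' x y) = s (ι x) (ι y)) (hp : ∀ x y, ι (p' x y) = p (ι x) (ι y)) :
    IsDendriform s' p' := by
  obtain ⟨bs, bp, h1, h2, h3⟩ := hE
  refine ⟨bs.of_injective ι hι hs, bp.of_injective ι hι hp,
    fun x y z => hι ?_, fun x y z => hι ?_, fun x y z => hι ?_⟩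
  · simp only [hs, hp, map_add, h1]
  · simp only [hs, hp, map_add, h2]
  · simp only [hs, hp, h3]

end Transport

section Graph

variable {D V : Type*} [AddCommGroup D] [Module ℂ D] [AddCommGroup V] [Module ℂ V]
  {s p : D → D → D} {Ω : ExtendingDatum D V} {d : V → D}

theorem uSucc_graph (hd : IsDeformationMap s p Ω d) (x y : V) :
    uSucc s Ω (d x, x) (d y, y) = (d (defSucc Ω d x y), defSucc Ω d x y) := by
  obtain ⟨hl, h, -⟩ := hd
  have h := h x y
  simp only [hl.map_add] at h
  simp only [uSucc, defSucc, Prod.mk.injEq, hl.map_add]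
  exact ⟨by linear_combination (norm := module) h, by abel⟩

theorem uPrec_graph (hd : IsDeformationMap s p Ω d) (x y : V) :
    uPrec p Ω (d x, x) (d y, y) = (d (defPrec Ω d x y), defPrec Ω d x y) := by
  obtain ⟨hl, -, h⟩ := hd
  have h := h x y
  simp only [hl.map_add] at h
  simp only [uPrec, defPrec, Prod.mk.injEq, hl.map_add]
  exact ⟨by linear_combination (norm := module) h, by abel⟩

end Graph

/-- the deformation `V_d` of `V` by a deformation map `d` of a
dendriform extending structure `Ω(D,V)` is a dendriform algebra. -/
theorem deformation_isDendriform {D V : Type*}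
    [AddCommGroup D] [Module ℂ D] [AddCommGroup V] [Module ℂ V]
    (s p : D → D → D) (hD : IsDendriform s p)
    (Ω : ExtendingDatum D V) (hΩ : IsExtendingStructure s p Ω)
    (d : V → D) (hd : IsDeformationMap s p Ω d) :
    IsDendriform (defSucc Ω d) (defPrec Ω d) := by
  exact hΩ.2.of_injective ((hd.1.mk' d).prod LinearMap.id)
    (fun x y hxy => congrArg Prod.snd hxy)
    (fun x y => (uSucc_graph hd x y).symm) (fun x y => (uPrec_graph hd x y).symm)

end DendriformES
end

section
/- Let D be a subalgebra of a dendriform algebra (E,≻_E,≺_E), let ρ : E → D be a linear map with ρ(a) = a for all a ∈ D, let V := ker ρ, and let Ω(D,V) be the canonical extending datum of D through V (which is a dendriform extending structure). Suppose B is a dendriform complement of D in E, i.e., a subalgebra of E with E = D + B and D ∩ B = {0}, and let δ̃ : E → D be the retraction associated to B (δ̃(a + b) = a for a ∈ D, b ∈ B). Then d := −δ̃|_V : V → D is a deformation map of Ω(D,V), and the map φ : V → B, φ(x) = x + d(x), is an isomorphism of dendriform algebras from the deformation V_d onto B. -/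
namespace DendriformES

section Complement

variable {E : Type*} [AddCommGroup E] [Module ℂ E]

theorem sub_delta_mem {D B : Submodule ℂ E} (hsup : D ⊔ B = ⊤) {δ : E →ₗ[ℂ] E}
    (hδfix : ∀ a ∈ D, δ a = a) (hδB : ∀ b ∈ B, δ b = 0) (x : E) : -δ x + x ∈ B := by
  obtain ⟨a, ha, b, hb, rfl⟩ := Submodule.mem_sup.1 (hsup ▸ Submodule.mem_top : x ∈ D ⊔ B)
  simpa [hδfix a ha, hδB b hb] using hb

theorem IsBilinear.add_add {m : E → E → E} (hm : IsBilinear m) (a x b y : E) :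
    m (a + x) (b + y) = m a b + m a y + m x b + m x y := by
  obtain ⟨h1, -, h3, -⟩ := hm
  rw [h1, h3, h3]; abel

/-- `δ` vanishes on the product of the `B`-components of `x` and `y`. -/
theorem delta_expand {m : E → E → E} (hm : IsBilinear m) {D B : Submodule ℂ E}
    (hDm : ∀ a b, a ∈ D → b ∈ D → m a b ∈ D) (hBm : ∀ u v, u ∈ B → v ∈ B → m u v ∈ B)
    (hsup : D ⊔ B = ⊤) {δ : E →ₗ[ℂ] E} (hδD : ∀ u, δ u ∈ D)
    (hδfix : ∀ a ∈ D, δ a = a) (hδB : ∀ b ∈ B, δ b = 0) (x y : E) :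
    m (-δ x) (-δ y) = -(δ (m x y) + δ (m (-δ x) y) + δ (m x (-δ y))) := by
  have h := hδB _ (hBm _ _ (sub_delta_mem hsup hδfix hδB x) (sub_delta_mem hsup hδfix hδB y))
  rw [hm.add_add, map_add, map_add, map_add,
    hδfix _ (hDm _ _ (D.neg_mem (hδD x)) (D.neg_mem (hδD y)))] at h
  rw [eq_neg_iff_add_eq_zero, ← h]; abel

end Complement

/-- given a dendriform complement `B` of `D` in `E` with
associated retraction `δ`, the map `d = -δ|_V` is a deformation map of the
canonical extending structure `Ω(D,V)`, and `φ(x) = x + d(x)` is an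
isomorphism of dendriform algebras from the deformation `V_d` onto `B`. -/
theorem complement_gives_deformationMap {E : Type*} [AddCommGroup E] [Module ℂ E]
    (sE pE : E → E → E) (hE : IsDendriform sE pE)
    (D : Submodule ℂ E)
    (hDs : ∀ a b, a ∈ D → b ∈ D → sE a b ∈ D)
    (hDp : ∀ a b, a ∈ D → b ∈ D → pE a b ∈ D)
    (ρ : E →ₗ[ℂ] E) (hρD : ∀ u, ρ u ∈ D) (hfix : ∀ a ∈ D, ρ a = a)
    (B : Submodule ℂ E)
    (hBs : ∀ u v, u ∈ B → v ∈ B → sE u v ∈ B)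
    (hBp : ∀ u v, u ∈ B → v ∈ B → pE u v ∈ B)
    (hsup : D ⊔ B = ⊤) (hinf : D ⊓ B = ⊥)
    (δ : E →ₗ[ℂ] E) (hδD : ∀ u, δ u ∈ D) (hδfix : ∀ a ∈ D, δ a = a)
    (hδB : ∀ b ∈ B, δ b = 0) :
    let sD : ↥D → ↥D → ↥D := fun a b => ⟨sE a.1 b.1, hDs _ _ a.2 b.2⟩
    let pD : ↥D → ↥D → ↥D := fun a b => ⟨pE a.1 b.1, hDp _ _ a.2 b.2⟩
    let Ω := canonicalDatum sE pE D ρ hρD hfix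
    let d : ↥(LinearMap.ker ρ) → ↥D := fun x => ⟨-δ x.1, D.neg_mem (hδD x.1)⟩
    let φ : ↥(LinearMap.ker ρ) → E := fun x => (d x).1 + x.1
    IsDeformationMap sD pD Ω d ∧
    IsLinearMap ℂ φ ∧ Function.Injective φ ∧
    (∀ x, φ x ∈ B) ∧ (∀ b ∈ B, ∃ x, φ x = b) ∧
    (∀ x y, φ (defSucc Ω d x y) = sE (φ x) (φ y)) ∧
    (∀ x y, φ (defPrec Ω d x y) = pE (φ x) (φ y)) := by
  intro sD pD Ω d φ
  have hδρ : ∀ u, δ (ρ u) = ρ u := fun u => hδfix _ (hρD u)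
  have es := fun x y => delta_expand hE.1 hDs hBs hsup hδD hδfix hδB x y
  have ep := fun x y => delta_expand hE.2.1 hDp hBp hsup hδD hδfix hδB x y
  refine ⟨⟨⟨fun x y => ?_, fun c x => ?_⟩, fun x y => ?_, fun x y => ?_⟩,
    ⟨fun x y => ?_, fun c x => ?_⟩, fun x y h => ?_,
    fun x => sub_delta_mem hsup hδfix hδB x.1, fun b hb => ?_, fun x y => ?_, fun x y => ?_⟩
  · ext; simp [d]; abel
  · ext; simp [d]
  · ext
    simp only [sD, Ω, d, canonicalDatum, Submodule.coe_add, Submodule.coe_sub,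
      map_add, map_sub, hδρ, es]
    abel
  · ext
    simp only [pD, Ω, d, canonicalDatum, Submodule.coe_add, Submodule.coe_sub,
      map_add, map_sub, hδρ, ep]
    abel
  · simp [φ, d]; abel
  · simp [φ, d]
  · -- `x - y = δ (x - y)` lies in `D`, hence is fixed by `ρ`, which also kills it.
    have h' : -δ x.1 + x.1 = -δ y.1 + y.1 := h
    have e : x.1 - y.1 = δ (x.1 - y.1) := by
      rw [map_sub, ← sub_eq_zero, ← sub_eq_zero.2 h']; abel
    have hf := hfix _ (e ▸ hδD _ : x.1 - y.1 ∈ D)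
    rw [map_sub, LinearMap.mem_ker.1 x.2, LinearMap.mem_ker.1 y.2, sub_zero] at hf
    exact Subtype.ext (sub_eq_zero.1 hf.symm)
  · refine ⟨⟨b - ρ b, sub_mem_ker D ρ hρD hfix b⟩, ?_⟩
    simp [φ, d, hδρ, hδB b hb]
  · change -δ _ + _ = sE (-δ x.1 + x.1) (-δ y.1 + y.1)
    rw [hE.1.add_add, es]
    simp only [defSucc, Ω, d, canonicalDatum, Submodule.coe_add, map_add, map_sub, hδρ]
    abel
  · change -δ _ + _ = pE (-δ x.1 + x.1) (-δ y.1 + y.1)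
    rw [hE.2.1.add_add, ep]
    simp only [defPrec, Ω, d, canonicalDatum, Submodule.coe_add, map_add, map_sub, hδρ]
    abel

end DendriformES
end

section
/- Let D be a subalgebra of a dendriform algebra (E,≻_E,≺_E), let ρ : E → D be a linear map with ρ(a) = a for all a ∈ D, let V := ker ρ, and let Ω(D,V) be the canonical extending datum of D through V. Then the map Δ₁ sending a dendriform complement B of D in E (a subalgebra of E with E = D + B and D ∩ B = {0}) to the deformation map d := −δ̃|_V, where δ̃ : E → D is the retraction associated to B, is a bijection from the set of dendriform complements of D in E onto the set of deformation maps of Ω(D,V). Its inverse sends a deformation map d to the subspace B := { d(x) + x : x ∈ V }, which is a dendriform complement of D in E. -/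
namespace DendriformES

section Helpers

variable {E : Type*} [AddCommGroup E] [Module ℂ E]

/-- The defect of the deformation equation for `d = -e|_V`: its left side minus its right side is
the `e`-component of the product of the elements `x - e x` and `y - e y` of `ker e`. -/
theorem deformation_defect {m : E → E → E} (hm : IsBilinear m) {D : Submodule ℂ E}
    (hD : ∀ a b, a ∈ D → b ∈ D → m a b ∈ D) (ρ e : E →ₗ[ℂ] E) (hρD : ∀ u, ρ u ∈ D)
    (heD : ∀ u, e u ∈ D) (hefix : ∀ a ∈ D, e a = a) (x y : E) :
    (m (-e x) (-e y) - -e (m x y - ρ (m x y))) -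
      (-e ((m (-e x) y - ρ (m (-e x) y)) + (m x (-e y) - ρ (m x (-e y))))
        - ρ (m (-e x) y) - ρ (m x (-e y)) - ρ (m x y)) = e (m (x - e x) (y - e y)) := by
  obtain ⟨hadd, -, hadd', -⟩ := hm
  have h1 : e (m (-e x) (-e y)) = m (-e x) (-e y) :=
    hefix _ (hD _ _ (D.neg_mem (heD x)) (D.neg_mem (heD y)))
  have h2 : ∀ u, e (ρ u) = ρ u := fun u => hefix _ (hρD u)
  rw [sub_eq_add_neg x, sub_eq_add_neg y, hadd, hadd', hadd']
  simp only [map_add, map_sub, h1, h2]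
  abel

theorem retraction_ker_eq_complement {D B : Submodule ℂ E} (hsup : D ⊔ B = ⊤)
    {e : E →ₗ[ℂ] E} (hefix : ∀ a ∈ D, e a = a) (hB : ∀ b ∈ B, e b = 0) :
    LinearMap.ker e = B := by
  ext u
  refine ⟨fun hu => ?_, fun hu => hB u hu⟩
  obtain ⟨a, ha, b, hb, rfl⟩ := Submodule.mem_sup.1 (hsup ▸ Submodule.mem_top : u ∈ D ⊔ B)
  have h : a = 0 := by simpa [hefix a ha, hB b hb] using hu
  simpa [h] using hb

/-- The kernel of a retraction `e` onto `D` consists of the elements `x - e x` with `x ∈ ker ρ`: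
for `u ∈ ker e`, take `x = u - ρ u`. -/
theorem exists_of_mem_ker_retraction {D : Submodule ℂ E} {ρ e : E →ₗ[ℂ] E}
    (hρD : ∀ u, ρ u ∈ D) (hfix : ∀ a ∈ D, ρ a = a) (hefix : ∀ a ∈ D, e a = a)
    {u : E} (hu : e u = 0) : ∃ x ∈ LinearMap.ker ρ, u = -e x + x :=
  ⟨u - ρ u, sub_mem_ker D ρ hρD hfix u, by simp [hu, hefix _ (hρD u)]⟩

/-- If the defect of `m` vanishes on `ker ρ`, then the kernel of the retraction `e` is closed
under `m`. -/
theorem retraction_ker_closed {m : E → E → E} {D : Submodule ℂ E} {ρ e : E →ₗ[ℂ] E}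
    (hρD : ∀ u, ρ u ∈ D) (hfix : ∀ a ∈ D, ρ a = a) (hefix : ∀ a ∈ D, e a = a)
    (h : ∀ x ∈ LinearMap.ker ρ, ∀ y ∈ LinearMap.ker ρ, e (m (x - e x) (y - e y)) = 0)
    (u v : E) (hu : u ∈ LinearMap.ker e) (hv : v ∈ LinearMap.ker e) :
    m u v ∈ LinearMap.ker e := by
  obtain ⟨x, hx, rfl⟩ := exists_of_mem_ker_retraction hρD hfix hefix hu
  obtain ⟨y, hy, rfl⟩ := exists_of_mem_ker_retraction hρD hfix hefix hv
  have := h x hx y hy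
  rwa [sub_eq_neg_add x, sub_eq_neg_add y] at this

/-- Every linear map `d : ker ρ → D` is `-e|_{ker ρ}` for a retraction `e` onto `D`, namely
`e u = ρ u - d (u - ρ u)`. -/
theorem exists_retraction {D : Submodule ℂ E} {ρ : E →ₗ[ℂ] E}
    (hρD : ∀ u, ρ u ∈ D) (hfix : ∀ a ∈ D, ρ a = a)
    {d : ↥(LinearMap.ker ρ) → ↥D} (hd : IsLinearMap ℂ d) :
    ∃ e : E →ₗ[ℂ] E, (∀ u, e u ∈ D) ∧ (∀ a ∈ D, e a = a) ∧
      ∀ x : ↥(LinearMap.ker ρ), (d x : E) = -e x := by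
  let π : E →ₗ[ℂ] ↥(LinearMap.ker ρ) :=
    (LinearMap.id - ρ).codRestrict (LinearMap.ker ρ) (sub_mem_ker D ρ hρD hfix)
  have hπD : ∀ a ∈ D, π a = 0 := fun a ha => Subtype.ext (by simp [π, hfix a ha])
  have hπV : ∀ x : ↥(LinearMap.ker ρ), π x = x := fun x => Subtype.ext (by simp [π])
  refine ⟨ρ - D.subtype ∘ₗ hd.mk' d ∘ₗ π, fun u => D.sub_mem (hρD u) (Subtype.prop _),
    fun a ha => ?_, fun x => ?_⟩
  · simp [hπD a ha, hfix a ha, -IsLinearMap.mk'_apply]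
  · simp [hπV]

end Helpers

/-- the map `Δ₁` sending a dendriform complement `B` of `D` in
`E` (with associated retraction `δ`) to the deformation map `d = -δ|_V` is a
bijection from the set of dendriform complements of `D` in `E` onto the set of
deformation maps of the canonical extending structure `Ω(D,V)`; its inverse
sends a deformation map `d` to `B = { d(x) + x : x ∈ V }`. -/
theorem complements_biject_deformationMaps {E : Type*} [AddCommGroup E] [Module ℂ E]
    (sE pE : E → E → E) (hE : IsDendriform sE pE)
    (D : Submodule ℂ E)
    (hDs : ∀ a b, a ∈ D → b ∈ D → sE a b ∈ D)
    (hDp : ∀ a b, a ∈ D → b ∈ D → pE a b ∈ D)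
    (ρ : E →ₗ[ℂ] E) (hρD : ∀ u, ρ u ∈ D) (hfix : ∀ a ∈ D, ρ a = a) :
    let sD : ↥D → ↥D → ↥D := fun a b => ⟨sE a.1 b.1, hDs _ _ a.2 b.2⟩
    let pD : ↥D → ↥D → ↥D := fun a b => ⟨pE a.1 b.1, hDp _ _ a.2 b.2⟩
    let Ω := canonicalDatum sE pE D ρ hρD hfix
    -- (1) Δ₁ is well defined: for every dendriform complement `B` with
    -- associated retraction `δ`, `d = -δ|_V` is a deformation map of `Ω(D,V)`
    (∀ B : Submodule ℂ E,
      (∀ u v, u ∈ B → v ∈ B → sE u v ∈ B) → (∀ u v, u ∈ B → v ∈ B → pE u v ∈ B) →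
      D ⊔ B = ⊤ → D ⊓ B = ⊥ →
      ∀ (δ : E →ₗ[ℂ] E) (hδD : ∀ u, δ u ∈ D), (∀ a ∈ D, δ a = a) →
        (∀ b ∈ B, δ b = 0) →
        IsDeformationMap sD pD Ω
          (fun x : ↥(LinearMap.ker ρ) => (⟨-δ x.1, D.neg_mem (hδD x.1)⟩ : ↥D))) ∧
    -- (2) Δ₁ is surjective, with inverse sending `d` to `B = {d(x) + x}`,
    -- which is a dendriform complement of `D` in `E`
    (∀ d : ↥(LinearMap.ker ρ) → ↥D, IsDeformationMap sD pD Ω d →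
      ∃ B : Submodule ℂ E,
        (B : Set E) = {u : E | ∃ x : ↥(LinearMap.ker ρ), u = (d x).1 + x.1} ∧
        (∀ u v, u ∈ B → v ∈ B → sE u v ∈ B) ∧ (∀ u v, u ∈ B → v ∈ B → pE u v ∈ B) ∧
        D ⊔ B = ⊤ ∧ D ⊓ B = ⊥ ∧
        (∀ (δ : E →ₗ[ℂ] E) (hδD : ∀ u, δ u ∈ D), (∀ a ∈ D, δ a = a) →
          (∀ b ∈ B, δ b = 0) →
          ∀ x : ↥(LinearMap.ker ρ), (⟨-δ x.1, D.neg_mem (hδD x.1)⟩ : ↥D) = d x)) ∧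
    -- (3) Δ₁ is injective: complements inducing the same deformation map agree
    (∀ B B' : Submodule ℂ E,
      (∀ u v, u ∈ B → v ∈ B → sE u v ∈ B) → (∀ u v, u ∈ B → v ∈ B → pE u v ∈ B) →
      D ⊔ B = ⊤ → D ⊓ B = ⊥ →
      (∀ u v, u ∈ B' → v ∈ B' → sE u v ∈ B') →
      (∀ u v, u ∈ B' → v ∈ B' → pE u v ∈ B') →
      D ⊔ B' = ⊤ → D ⊓ B' = ⊥ →
      ∀ (δ δ' : E →ₗ[ℂ] E),
        (∀ u, δ u ∈ D) → (∀ a ∈ D, δ a = a) → (∀ b ∈ B, δ b = 0) →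
        (∀ u, δ' u ∈ D) → (∀ a ∈ D, δ' a = a) → (∀ b ∈ B', δ' b = 0) →
        (∀ x : ↥(LinearMap.ker ρ), δ x.1 = δ' x.1) → B = B') := by
  intro sD pD Ω
  refine ⟨?_, ?_, ?_⟩
  · intro B hBs hBp hsup _ δ hδD hδfix hδB
    have hker := retraction_ker_eq_complement hsup hδfix hδB
    have hmem : ∀ x, x - δ x ∈ B := fun x => by
      rw [← hker]
      simp [hδfix _ (hδD x)]
    refine ⟨⟨fun x y => Subtype.ext ?_, fun c x => Subtype.ext ?_⟩, fun x y => Subtype.ext ?_,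
      fun x y => Subtype.ext ?_⟩
    · simp [add_comm]
    · simp
    · exact sub_eq_zero.1 ((deformation_defect hE.1 hDs ρ δ hρD hδD hδfix x y).trans
        (hδB _ (hBs _ _ (hmem x) (hmem y))))
    · exact sub_eq_zero.1 ((deformation_defect hE.2.1 hDp ρ δ hρD hδD hδfix x y).trans
        (hδB _ (hBp _ _ (hmem x) (hmem y))))
  · rintro d ⟨hlin, hds, hdp⟩
    obtain ⟨e, heD, hefix, hed⟩ := exists_retraction hρD hfix hlin
    obtain rfl : d = fun x => ⟨-e x.1, D.neg_mem (heD x.1)⟩ :=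
      funext fun x => Subtype.ext (hed x)
    have hset : ((LinearMap.ker e : Submodule ℂ E) : Set E) =
        {u : E | ∃ x : ↥(LinearMap.ker ρ), u = -e x.1 + x.1} := by
      ext u
      constructor
      · intro hu
        obtain ⟨x, hx, h⟩ := exists_of_mem_ker_retraction hρD hfix hefix hu
        exact ⟨⟨x, hx⟩, h⟩
      · rintro ⟨x, rfl⟩
        simp [hefix _ (heD x)]
    refine ⟨LinearMap.ker e, hset, ?_, ?_, ?_, ?_, ?_⟩
    · refine retraction_ker_closed hρD hfix hefix fun x hx y hy => ?_
      exact (deformation_defect hE.1 hDs ρ e hρD heD hefix x y).symm.trans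
        (sub_eq_zero.2 (congrArg Subtype.val (hds ⟨x, hx⟩ ⟨y, hy⟩)))
    · refine retraction_ker_closed hρD hfix hefix fun x hx y hy => ?_
      exact (deformation_defect hE.2.1 hDp ρ e hρD heD hefix x y).symm.trans
        (sub_eq_zero.2 (congrArg Subtype.val (hdp ⟨x, hx⟩ ⟨y, hy⟩)))
    · refine eq_top_iff.2 fun u _ => Submodule.mem_sup.2
        ⟨e u, heD u, u - e u, sub_mem_ker D e heD hefix u, by abel⟩
    · refine eq_bot_iff.2 ?_
      rintro u ⟨hu, hu'⟩
      exact (hefix u hu).symm.trans hu'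
    · intro δ hδD hδfix hδB x
      -- `δ` and `e` agree on `D` and both vanish on `ker e`, so they agree at `x = e x + (x - e x)`.
      have h := hδB _ (sub_mem_ker D e heD hefix x.1)
      rw [map_sub, hδfix _ (heD _), sub_eq_zero] at h
      exact Subtype.ext (congrArg Neg.neg h)
  · intro B B' _ _ hsup _ _ _ hsup' _ δ δ' _ hfδ hδB _ hfδ' hδB' heq
    rw [← retraction_ker_eq_complement hsup hfδ hδB,
      ← retraction_ker_eq_complement hsup' hfδ' hδB']
    congr 1
    ext u
    have h := heq ⟨u - ρ u, sub_mem_ker D ρ hρD hfix u⟩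
    simpa [hfδ _ (hρD u), hfδ' _ (hρD u)] using h

end DendriformES
end
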